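/- Let b be a prime, s, β, m ∈ ℕ, and let Q ⊂ [0,1)^{βs} be a digital net over F_b with generating matrices C_1,...,C_{βs} ∈ F_b^{m×m}. Let P ⊂ [0,1)^s be the digital net obtained from Q by digit interlacing composition with factor β, and extend E_β to ℕ₀^{βs} → ℕ₀^s by applying E_β to each consecutive block of β components. Then P⊥ = {E_β(k) : k ∈ Q⊥}, and consequently κ(P) = κ(Q). -/

import Mathlib

/-!
Interlacing only rearranges digits: digit `β * a + i` of `E_β(k)` is digit `a` of `k_i`. Since a
natural number is the same thing as a finitely supported digit sequence, `E_β` is therefore onto,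
vanishes only at `0` and preserves the number of nonzero digits. Row `β * a + i` of an interlaced
matrix is chosen by the same rule, so the linear system defining `P⊥` at `E_β(k)` is the one
defining `Q⊥` at `k`, with its terms in another order.
-/

open scoped BigOperators

/-- The `i`-th digit (starting from `i = 0`) of the `b`-adic expansion of `k`. -/
def bdigit (b k i : ℕ) : ℕ := k / b ^ i % b

/-- The set of indices of nonzero `b`-adic digits of `k`. -/
def bsupp (b k : ℕ) : Finset ℕ := (Finset.range (k + 1)).filter fun i => bdigit b k i ≠ 0

/-- The Hamming metric `κ(k)`: the number of nonzero `b`-adic digits of `k`. -/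
def hamming (b k : ℕ) : ℕ := (bsupp b k).card

/-- The Dick metric `μ_α(k)`: the sum of the `min(v, α)` largest exponents-plus-one
`a_1 > a_2 > ⋯` of the nonzero `b`-adic digits of `k`. -/
def dick (b α k : ℕ) : ℕ := ((((bsupp b k).sort (· ≤ ·)).reverse.take α).map (· + 1)).sum

/-- Digitwise addition `k ⊕ l` modulo `b` of the `b`-adic digits. -/
def dadd (b k l : ℕ) : ℕ :=
  ∑ i ∈ Finset.range (k + l + 1), (bdigit b k i + bdigit b l i) % b * b ^ i

/-- Digitwise subtraction `k ⊖ l` modulo `b` of the `b`-adic digits. -/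
def dsub (b k l : ℕ) : ℕ :=
  ∑ i ∈ Finset.range (k + l + 1), (bdigit b k i + (b - bdigit b l i)) % b * b ^ i

/-- Hamming metric of a vector: sum over coordinates. -/
def hammingVec (b : ℕ) {s : ℕ} (k : Fin s → ℕ) : ℕ := ∑ j, hamming b (k j)

/-- Dick metric of a vector: sum over coordinates. -/
def dickVec (b α : ℕ) {s : ℕ} (k : Fin s → ℕ) : ℕ := ∑ j, dick b α (k j)

/-- The column vector of the first `n` `b`-adic digits of `k`, as a vector over `F_b = ZMod b`. -/
def trv (b n : ℕ) (k : ℕ) : Fin n → ZMod b := fun i => (bdigit b k i.1 : ZMod b)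

/-- The dual net `P⊥` of the digital net with generating matrices `C`. -/
def dualNet (b : ℕ) {s n m : ℕ} (C : Fin s → Matrix (Fin n) (Fin m) (ZMod b)) :
    Set (Fin s → ℕ) :=
  {k | (∀ j, k j < b ^ n) ∧ ∑ j, ((C j).transpose).mulVec (trv b n (k j)) = 0}

/-- The dual net `P∞⊥` of the digital net with generating matrices `C` (no upper bound
on the components of `k`). -/
def dualNetInf (b : ℕ) {s n m : ℕ} (C : Fin s → Matrix (Fin n) (Fin m) (ZMod b)) :
    Set (Fin s → ℕ) :=
  {k | ∑ j, ((C j).transpose).mulVec (trv b n (k j)) = 0}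

/-- The `h`-th point of the digital net generated by the matrices `C` over `ZMod b`:
its `j`-th coordinate is `∑_{i=1}^n ξ_i b^{-i}` with `(ξ_1,…,ξ_n)ᵀ = C_j · (η_0,…,η_{m-1})ᵀ`,
where `η` are the `b`-adic digits of `h`. -/
noncomputable def netPoint (b : ℕ) {s n m : ℕ} (C : Fin s → Matrix (Fin n) (Fin m) (ZMod b))
    (h : ℕ) : Fin s → ℝ :=
  fun j => ∑ i : Fin n,
    (((C j).mulVec (fun v : Fin m => (bdigit b h v.1 : ZMod b)) i).val : ℝ) / (b : ℝ) ^ (i.1 + 1)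

/-- Sum of the `α` largest elements of a finite set of (0-based) row indices, counted
1-based, i.e. each index `i` contributes `i + 1`. -/
def topSum (α : ℕ) (R : Finset ℕ) : ℕ := (((R.sort (· ≤ ·)).reverse.take α).map (· + 1)).sum

/-- The digital net with generating matrices `C_1,…,C_s ∈ F_b^{n×m}` is an order `α`
digital `(t,m,s)`-net: for every choice of rows `i_{j,v_j} < ⋯ < i_{j,1}` from each `C_j`
such that the 1-based indices of the `min(α, v_j)` largest chosen rows of each matrix sum
to at most `αm - t`, the chosen rows are linearly independent over `F_b`. -/
def isOrderNet (b α t m : ℕ) {s n : ℕ} (C : Fin s → Matrix (Fin n) (Fin m) (ZMod b)) : Prop :=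
  ∀ R : Fin s → Finset (Fin n),
    (∑ j, topSum α ((R j).image Fin.val)) ≤ α * m - t →
    LinearIndependent (ZMod b) fun p : Σ j : Fin s, {i : Fin n // i ∈ R j} => C p.1 p.2.1

/-- The minimum Dick metric `μ_α(P)` of the digital net with generating matrices `C`,
namely the minimum of `μ_α(k)` over nonzero elements `k` of the dual net. -/
noncomputable def minDick (b α : ℕ) {s n m : ℕ}
    (C : Fin s → Matrix (Fin n) (Fin m) (ZMod b)) : ℕ :=
  sInf (dickVec b α '' {k | k ∈ dualNet b C ∧ k ≠ 0})

/-- The minimum Hamming metric `κ(P)` of the digital net with generating matrices `C`. -/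
noncomputable def minHamming (b : ℕ) {s n m : ℕ}
    (C : Fin s → Matrix (Fin n) (Fin m) (ZMod b)) : ℕ :=
  sInf (hammingVec b '' {k | k ∈ dualNet b C ∧ k ≠ 0})

/-- Dick's digit interlacing composition with interlacing factor `α` applied to the
generating matrices `C_1,…,C_{αs} ∈ F_b^{m×m}`: the resulting matrices
`D_1,…,D_s ∈ F_b^{αm×m}` are such that the (1-based) `(α(h-1)+i)`-th row of `D_j` is the
`h`-th row of `C_{α(j-1)+i}`. -/
def interlace {R : Type*} (α s m : ℕ) (C : Fin (α * s) → Matrix (Fin m) (Fin m) R) :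
    Fin s → Matrix (Fin (α * m)) (Fin m) R :=
  fun j => Matrix.of fun r v =>
    C ⟨α * j.1 + r.1 % α, by
        have hα : 0 < α := by
          rcases Nat.eq_zero_or_pos α with h | h
          · exact absurd r.2 (by simp [h])
          · exact h
        have h1 : α * (j.1 + 1) ≤ α * s := Nat.mul_le_mul_left α j.2
        have h2 : α * (j.1 + 1) = α * j.1 + α := by ring
        have h3 : r.1 % α < α := Nat.mod_lt _ hα
        omega⟩
      ⟨r.1 / α, by
        have hα : 0 < α := by
          rcases Nat.eq_zero_or_pos α with h | h
          · exact absurd r.2 (by simp [h])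
          · exact h
        exact Nat.div_lt_of_lt_mul r.2⟩
      v

/-- The digit interlacing map `E_β : ℕ^β → ℕ`,
`E_β(k_1,…,k_β) = ∑_{a≥0} ∑_{j=1}^β κ_{a,j} b^{aβ+j-1}` where `κ_{a,j}` is the `a`-th
`b`-adic digit of `k_j`. -/
def Enat (b β : ℕ) (k : Fin β → ℕ) : ℕ :=
  ∑ j : Fin β, ∑ a ∈ Finset.range (k j + 1), bdigit b (k j) a * b ^ (a * β + j.1)

/-- The digit interlacing map extended to vectors, `E_β : ℕ^{βs} → ℕ^s`, applying `E_β`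
to each consecutive block of `β` components. -/
def Evec (b β s : ℕ) (k : Fin (β * s) → ℕ) : Fin s → ℕ :=
  fun j => Enat b β fun i =>
    k ⟨β * j.1 + i.1, by
      have h1 : β * (j.1 + 1) ≤ β * s := Nat.mul_le_mul_left β j.2
      have h2 : β * (j.1 + 1) = β * j.1 + β := by ring
      have h3 := i.2
      omega⟩

/-- The enumeration of `Fin (β * s)` by `s` consecutive blocks of length `β`, sending `(j, i)` to
`β * j + i`. It indexes both the components of a vector in `ℕ^{βs}` by block and place in the block
and the rows of an interlaced matrix by original row and original matrix. -/
def blockEquiv {β s : ℕ} : Fin s × Fin β ≃ Fin (β * s) :=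
  finProdFinEquiv.trans (finCongr (mul_comm s β))

section Blocks

variable {β s : ℕ}

lemma val_blockEquiv (j : Fin s) (i : Fin β) : (blockEquiv (j, i) : ℕ) = β * j + i := by
  simp [blockEquiv, add_comm]

lemma forall_blockEquiv {p : Fin (β * s) → Prop} :
    (∀ x, p x) ↔ ∀ j i, p (blockEquiv (j, i)) := by
  rw [← blockEquiv.forall_congr_right, Prod.forall]

lemma sum_blockEquiv {M : Type*} [AddCommMonoid M] (f : Fin (β * s) → M) :
    ∑ x, f x = ∑ j, ∑ i, f (blockEquiv (j, i)) := by
  rw [← blockEquiv.sum_comp, Fintype.sum_prod_type]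

lemma Evec_apply (b : ℕ) (k : Fin (β * s) → ℕ) (j : Fin s) :
    Evec b β s k j = Enat b β fun i => k (blockEquiv (j, i)) := by
  rw [Evec]
  congr! 3 with i
  exact Fin.ext (val_blockEquiv j i).symm

lemma interlace_blockEquiv {R : Type*} {m : ℕ} (C : Fin (β * s) → Matrix (Fin m) (Fin m) R)
    (j : Fin s) (a : Fin m) (i : Fin β) :
    interlace β s m C j (blockEquiv (a, i)) = C (blockEquiv (j, i)) a := by
  have hdiv : (β * (a : ℕ) + i) / β = a := by
    rw [Nat.mul_add_div i.pos, Nat.div_eq_of_lt i.isLt, add_zero]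
  have hmod : (β * (a : ℕ) + i) % β = i := by
    rw [Nat.mul_add_mod, Nat.mod_eq_of_lt i.isLt]
  funext v
  simp only [interlace, Matrix.of_apply, val_blockEquiv, hdiv, hmod]
  exact congrArg (C · a v) (Fin.ext (val_blockEquiv j i).symm)

end Blocks

section Digits

variable {b k l n : ℕ}

lemma bdigit_lt (hb : 1 < b) (k i : ℕ) : bdigit b k i < b :=
  Nat.mod_lt _ (by lia)

lemma bdigit_eq_zero_of_lt_pow {i : ℕ} (h : k < b ^ i) : bdigit b k i = 0 := by
  rw [bdigit, Nat.div_eq_of_lt h, Nat.zero_mod]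

lemma bdigit_sum_mul_pow (d : Fin n → Fin b) (i : Fin n) :
    bdigit b (∑ j, (d j : ℕ) * b ^ (j : ℕ)) i = d i :=
  congrArg Fin.val (congrFun (finFunctionFinEquiv.symm_apply_apply d) i)

lemma sum_bdigit_mul_pow (hk : k < b ^ n) : ∑ i : Fin n, bdigit b k i * b ^ (i : ℕ) = k :=
  congrArg Fin.val (finFunctionFinEquiv.apply_symm_apply ⟨k, hk⟩)

lemma lt_pow_of_le (hb : 1 < b) (h : k ≤ n) : k < b ^ n :=
  h.trans_lt (Nat.lt_pow_self hb)

lemma eq_of_bdigit_eq (hb : 1 < b) (h : ∀ i, bdigit b k i = bdigit b l i) : k = l := by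
  calc k = ∑ i : Fin (k + l), bdigit b k i * b ^ (i : ℕ) :=
        (sum_bdigit_mul_pow (lt_pow_of_le hb (Nat.le_add_right k l))).symm
    _ = ∑ i : Fin (k + l), bdigit b l i * b ^ (i : ℕ) := by simp only [h]
    _ = l := sum_bdigit_mul_pow (lt_pow_of_le hb (Nat.le_add_left l k))

lemma lt_pow_iff_bdigit_eq_zero (hb : 1 < b) : k < b ^ n ↔ ∀ i, n ≤ i → bdigit b k i = 0 := by
  refine ⟨fun hk i hi => bdigit_eq_zero_of_lt_pow
    (hk.trans_le (Nat.pow_le_pow_right (by lia) hi)), fun h => ?_⟩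
  have hdiv : k / b ^ n = 0 := eq_of_bdigit_eq hb fun i => by
    rw [bdigit, Nat.div_div_eq_div_mul, ← pow_add]
    simpa [bdigit] using h (n + i) (Nat.le_add_right n i)
  exact (Nat.div_eq_zero_iff_lt (by positivity)).1 hdiv

lemma exists_forall_bdigit_eq (hb : 1 < b) {d : ℕ → ℕ} (hd : ∀ i, d i < b)
    (hzero : ∀ i, n ≤ i → d i = 0) : ∃ k, ∀ i, bdigit b k i = d i := by
  let f : Fin n → Fin b := fun i => ⟨d i, hd i⟩
  have hlt : ∑ i, (f i : ℕ) * b ^ (i : ℕ) < b ^ n := (finFunctionFinEquiv f).isLt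
  refine ⟨∑ i, (f i : ℕ) * b ^ (i : ℕ), fun i => ?_⟩
  rcases lt_or_ge i n with hi | hi
  · exact bdigit_sum_mul_pow f ⟨i, hi⟩
  · rw [hzero i hi, (lt_pow_iff_bdigit_eq_zero hb).1 hlt i hi]

lemma mem_bsupp (hb : 1 < b) {i : ℕ} : i ∈ bsupp b k ↔ bdigit b k i ≠ 0 := by
  simp only [bsupp, Finset.mem_filter, Finset.mem_range, and_iff_right_iff_imp]
  contrapose!
  exact fun hi => bdigit_eq_zero_of_lt_pow (lt_pow_of_le hb (by lia))

end Digits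

section Interlacing

variable {b β : ℕ}

lemma Enat_eq_sum_blockEquiv (hb : 1 < b) {n : ℕ} {k : Fin β → ℕ} (hk : ∀ i, k i < b ^ n) :
    Enat b β k = ∑ p : Fin n × Fin β, bdigit b (k p.2) p.1 * b ^ (blockEquiv p : ℕ) := by
  rw [Fintype.sum_prod_type_right, Enat]
  refine Finset.sum_congr rfl fun i _ => ?_
  simp only [val_blockEquiv, mul_comm β]
  rw [Fin.sum_univ_eq_sum_range fun a => bdigit b (k i) a * b ^ (a * β + i)]
  have hzero : ∀ a, bdigit b (k i) a = 0 → bdigit b (k i) a * b ^ (a * β + i) = 0 :=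
    fun a ha => by rw [ha, zero_mul]
  refine Finset.sum_congr_of_eq_on_inter (fun a _ ha => hzero a ?_) (fun a _ ha => hzero a ?_)
    fun _ _ _ => rfl
  · exact (lt_pow_iff_bdigit_eq_zero hb).1 (hk i) a (by simpa using ha)
  · exact bdigit_eq_zero_of_lt_pow (lt_pow_of_le hb (by rw [Finset.mem_range] at ha; lia))

lemma bdigit_Enat (hb : 1 < b) (k : Fin β → ℕ) (a : ℕ) (i : Fin β) :
    bdigit b (Enat b β k) (β * a + i) = bdigit b (k i) a := by
  obtain ⟨n, hn⟩ := (Set.finite_range k).bddAbove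
  have hk : ∀ i, k i < b ^ (a + n + 1) := fun i =>
    lt_pow_of_le hb ((hn ⟨i, rfl⟩).trans (by lia))
  let d : Fin (β * (a + n + 1)) → Fin b := fun r =>
    ⟨bdigit b (k (blockEquiv.symm r).2) (blockEquiv.symm r).1, bdigit_lt hb _ _⟩
  have hE : Enat b β k = ∑ r, (d r : ℕ) * b ^ (r : ℕ) := by
    rw [Enat_eq_sum_blockEquiv hb hk, ← blockEquiv.sum_comp]
    simp only [d, Equiv.symm_apply_apply]
  have hdigit := bdigit_sum_mul_pow d (blockEquiv (⟨a, by lia⟩, i))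
  rw [← hE, val_blockEquiv] at hdigit
  simpa only [d, Equiv.symm_apply_apply] using hdigit

variable [NeZero β]

lemma bdigit_Enat_eq_mod_div (hb : 1 < b) (k : Fin β → ℕ) (r : ℕ) :
    bdigit b (Enat b β k) r = bdigit b (k (Fin.ofNat β r)) (r / β) := by
  rw [← bdigit_Enat hb, Fin.val_ofNat, Nat.div_add_mod]

lemma Enat_lt_pow_iff (hb : 1 < b) {k : Fin β → ℕ} {n : ℕ} :
    Enat b β k < b ^ (β * n) ↔ ∀ i, k i < b ^ n := by
  simp only [lt_pow_iff_bdigit_eq_zero hb]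
  refine ⟨fun h i a ha => ?_, fun h r hr => ?_⟩
  · rw [← bdigit_Enat hb]
    exact h _ (Nat.le_add_right_of_le (Nat.mul_le_mul_left β ha))
  · rw [bdigit_Enat_eq_mod_div hb]
    exact h _ _ (by rwa [Nat.le_div_iff_mul_le (NeZero.pos β), mul_comm])

lemma Enat_eq_zero_iff (hb : 1 < b) {k : Fin β → ℕ} : Enat b β k = 0 ↔ ∀ i, k i = 0 := by
  simpa using Enat_lt_pow_iff hb (k := k) (n := 0)

lemma Enat_surjective (hb : 1 < b) : Function.Surjective (Enat b β) := by
  intro l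
  have hzero (i : Fin β) (a : ℕ) (ha : l ≤ a) : bdigit b l (β * a + i) = 0 :=
    bdigit_eq_zero_of_lt_pow (lt_pow_of_le hb
      (Nat.le_add_right_of_le (ha.trans (Nat.le_mul_of_pos_left a (NeZero.pos β)))))
  choose k hk using fun i : Fin β =>
    exists_forall_bdigit_eq hb (fun a => bdigit_lt hb l (β * a + i)) (hzero i)
  refine ⟨k, eq_of_bdigit_eq hb fun r => ?_⟩
  rw [bdigit_Enat_eq_mod_div hb, hk, Fin.val_ofNat, Nat.div_add_mod]

lemma hamming_Enat (hb : 1 < b) (k : Fin β → ℕ) :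
    hamming b (Enat b β k) = ∑ i, hamming b (k i) := by
  let e : ℕ ≃ Σ _ : Fin β, ℕ :=
    (Nat.divModEquiv β).trans ((Equiv.prodComm _ _).trans (Equiv.sigmaEquivProd _ _).symm)
  have he (r : ℕ) : e r = ⟨Fin.ofNat β r, r / β⟩ := rfl
  simp only [hamming]
  rw [← Finset.card_sigma]
  refine Finset.card_equiv e fun r => ?_
  simp only [he, Finset.mem_sigma, Finset.mem_univ, true_and, mem_bsupp hb,
    bdigit_Enat_eq_mod_div hb]

variable {s : ℕ}

lemma Evec_eq_zero_iff (hb : 1 < b) {k : Fin (β * s) → ℕ} : Evec b β s k = 0 ↔ k = 0 := by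
  simp only [funext_iff, forall_blockEquiv, Evec_apply, Pi.zero_apply, Enat_eq_zero_iff hb]

lemma Evec_surjective (hb : 1 < b) : Function.Surjective (Evec b β s) := by
  intro l
  choose k hk using fun j => Enat_surjective (β := β) hb (l j)
  refine ⟨fun x => k (blockEquiv.symm x).1 (blockEquiv.symm x).2, funext fun j => ?_⟩
  simp only [Evec_apply, Equiv.symm_apply_apply]
  exact hk j

lemma hammingVec_Evec (hb : 1 < b) (k : Fin (β * s) → ℕ) :
    hammingVec b (Evec b β s k) = hammingVec b k := by
  simp only [hammingVec, Evec_apply, hamming_Enat hb, sum_blockEquiv]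

end Interlacing

section DualNet

variable {b β s m : ℕ}

lemma trv_Evec_blockEquiv (hb : 1 < b) (k : Fin (β * s) → ℕ) (j : Fin s) (a : Fin m)
    (i : Fin β) :
    trv b (β * m) (Evec b β s k j) (blockEquiv (a, i)) = trv b m (k (blockEquiv (j, i))) a := by
  simp only [trv, val_blockEquiv, Evec_apply, bdigit_Enat hb]

lemma sum_transpose_interlace_mulVec_trv (hb : 1 < b)
    (C : Fin (β * s) → Matrix (Fin m) (Fin m) (ZMod b)) (k : Fin (β * s) → ℕ) :
    ∑ j, (interlace β s m C j).transpose.mulVec (trv b (β * m) (Evec b β s k j)) =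
      ∑ x, (C x).transpose.mulVec (trv b m (k x)) := by
  simp only [Matrix.mulVec_transpose, Matrix.vecMul_eq_sum]
  calc ∑ j, ∑ r, trv b (β * m) (Evec b β s k j) r • interlace β s m C j r
      = ∑ j, ∑ a, ∑ i, trv b m (k (blockEquiv (j, i))) a • C (blockEquiv (j, i)) a := by
        simp only [sum_blockEquiv, trv_Evec_blockEquiv hb, interlace_blockEquiv]
    _ = ∑ j, ∑ i, ∑ a, trv b m (k (blockEquiv (j, i))) a • C (blockEquiv (j, i)) a :=
        Finset.sum_congr rfl fun _ _ => Finset.sum_comm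
    _ = ∑ x, ∑ a, trv b m (k x) a • C x a :=
        (sum_blockEquiv fun x => ∑ a, trv b m (k x) a • C x a).symm

variable [NeZero β]

lemma Evec_mem_dualNet_interlace_iff (hb : 1 < b)
    (C : Fin (β * s) → Matrix (Fin m) (Fin m) (ZMod b)) (k : Fin (β * s) → ℕ) :
    Evec b β s k ∈ dualNet b (interlace β s m C) ↔ k ∈ dualNet b C := by
  have hlt : (∀ j, Evec b β s k j < b ^ (β * m)) ↔ ∀ x, k x < b ^ m := by
    simp only [Evec_apply, Enat_lt_pow_iff hb, forall_blockEquiv]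
  simp only [dualNet, Set.mem_ofPred_eq, sum_transpose_interlace_mulVec_trv hb, hlt]

lemma dualNet_interlace (hb : 1 < b) (C : Fin (β * s) → Matrix (Fin m) (Fin m) (ZMod b)) :
    dualNet b (interlace β s m C) = Evec b β s '' dualNet b C := by
  have hpre : Evec b β s ⁻¹' dualNet b (interlace β s m C) = dualNet b C :=
    Set.ext (Evec_mem_dualNet_interlace_iff hb C)
  rw [← hpre, Set.image_preimage_eq _ (Evec_surjective hb)]

lemma minHamming_interlace (hb : 1 < b) (C : Fin (β * s) → Matrix (Fin m) (Fin m) (ZMod b)) :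
    minHamming b (interlace β s m C) = minHamming b C := by
  have hpre : Evec b β s ⁻¹' {l | l ∈ dualNet b (interlace β s m C) ∧ l ≠ 0} =
      {k | k ∈ dualNet b C ∧ k ≠ 0} :=
    Set.ext fun k => and_congr (Evec_mem_dualNet_interlace_iff hb C k)
      (Evec_eq_zero_iff hb).not
  have himage : {l | l ∈ dualNet b (interlace β s m C) ∧ l ≠ 0} =
      Evec b β s '' {k | k ∈ dualNet b C ∧ k ≠ 0} := by
    rw [← hpre, Set.image_preimage_eq _ (Evec_surjective hb)]
  simp only [minHamming, himage, Set.image_image, hammingVec_Evec hb]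

end DualNet

theorem dual_of_interlaced_general (b s β m : ℕ) (hb : 1 < b) (hβ : 0 < β)
    (C : Fin (β * s) → Matrix (Fin m) (Fin m) (ZMod b)) :
    dualNet b (interlace β s m C) = Evec b β s '' dualNet b C ∧
    minHamming b (interlace β s m C) = minHamming b C :=
  have : NeZero β := .of_pos hβ
  ⟨dualNet_interlace hb C, minHamming_interlace hb C⟩

/-- If `P ⊂ [0,1)^s` is obtained from the digital net `Q ⊂ [0,1)^{βs}`
(with square `m × m` generating matrices) by digit interlacing composition with factor
`β`, then `P⊥ = {E_β(k) : k ∈ Q⊥}`, and consequently `κ(P) = κ(Q)`. -/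
theorem dual_of_interlaced (b s β m : ℕ) (hb : b.Prime) (hs : 0 < s) (hβ : 0 < β)
    (hm : 0 < m) (C : Fin (β * s) → Matrix (Fin m) (Fin m) (ZMod b)) :
    dualNet b (interlace β s m C) = Evec b β s '' dualNet b C ∧
    minHamming b (interlace β s m C) = minHamming b C :=
  dual_of_interlaced_general b s β m hb.one_lt hβ C
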